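/- The parabolic basin Λ_ω is an open subset of ℂ and equals the interior of the augmented basin Λ̃_ω; consequently Λ̃_ω is the disjoint union of the open set Λ_ω and the countable backward orbit {z ∈ ℂ : ∃ n ≥ 0, P_ω^n(z) = 0} of the parabolic fixed point. -/

import Mathlib

open Complex Filter Topology Set

/-- The quadratic polynomial `P_ω(z) = ω z + z²`. -/
noncomputable def Pq (ω : ℂ) : ℂ → ℂ := fun z => ω * z + z ^ 2

/-- The augmented parabolic basin `Λ̃_ω`: points whose orbit converges to `0`. -/
def basinAug (ω : ℂ) : Set ℂ := {z | Tendsto (fun n => (Pq ω)^[n] z) atTop (𝓝 0)}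

/-- The backward orbit of the parabolic fixed point `0`. -/
def preFixed (ω : ℂ) : Set ℂ := {z | ∃ n : ℕ, (Pq ω)^[n] z = 0}

/-- The parabolic basin `Λ_ω`. -/
def basin (ω : ℂ) : Set ℂ := basinAug ω \ preFixed ω


lemma aux_fatou (f Q : ℂ → ℂ) (k : ℕ) (hk : 1 ≤ k) (hQ : ContinuousAt Q 0) (hQ0 : Q 0 ≠ 0)
    (hf : ∀ z, f z = z + z ^ (k + 1) * Q z) :
    ∃ w : ℂ → ℂ, ContinuousOn w {0}ᶜ ∧
      (∀ ε > 0, ∃ R : ℝ, ∀ z ≠ 0, R < (w z).re → ‖z‖ < ε) ∧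
      (∃ δ > 0, ∀ z ≠ 0, ‖z‖ < δ → f z ≠ 0 ∧ (w z).re + 1 / 2 ≤ (w (f z)).re) := by
  have hk0 : (k : ℂ) ≠ 0 := by exact_mod_cast (by omega : k ≠ 0)
  set a := Q 0 with ha
  set g : ℂ → ℂ := fun u => ((1 + u) ^ k)⁻¹ with hg
  have hgd : HasDerivAt g (-k) 0 := by
    have h1 : HasDerivAt (fun u : ℂ => (1 + u) ^ k) (k * (1 + 0) ^ (k - 1) * 1) 0 :=
      ((hasDerivAt_id (0 : ℂ)).const_add 1).pow k
    have h2 := h1.inv (by simp)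
    refine h2.congr_deriv ?_
    simp
  have hD : ContinuousAt (dslope g 0) 0 := continuousAt_dslope_same.2 hgd.differentiableAt
  have hD0 : dslope g 0 0 = -k := by rw [dslope_same, hgd.deriv]
  have hu : ContinuousAt (fun z : ℂ => z ^ k * Q z) 0 := by fun_prop
  have hu0 : (0 : ℂ) ^ k * Q 0 = 0 := by simp [show k ≠ 0 by omega]
  refine ⟨fun z => -(k * a * z ^ k)⁻¹, ?_, ?_, ?_⟩
  · apply ContinuousOn.neg
    apply ContinuousOn.inv₀ (by fun_prop)
    intro z hz
    have : z ≠ 0 := hz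
    positivity
  · intro ε hε
    refine ⟨(‖(k : ℂ) * a‖ * ε ^ k)⁻¹, fun z hz h => ?_⟩
    by_contra hc
    push Not at hc
    have h1 := h.trans_le (Complex.re_le_norm _)
    rw [norm_neg, norm_inv, norm_mul (_ * _), norm_pow] at h1
    have hka : 0 < ‖(k : ℂ) * a‖ := norm_pos_iff.2 (mul_ne_zero hk0 hQ0)
    have : (‖(k : ℂ) * a‖ * ‖z‖ ^ k)⁻¹ ≤ (‖(k : ℂ) * a‖ * ε ^ k)⁻¹ := by gcongr
    linarith
  · have hlim : ContinuousAt (fun z : ℂ => -(k * a)⁻¹ * Q z * dslope g 0 (z ^ k * Q z)) 0 := by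
      have h3 : ContinuousAt (fun z : ℂ => dslope g 0 (z ^ k * Q z)) 0 :=
        ContinuousAt.comp (f := fun z : ℂ => z ^ k * Q z) (g := dslope g 0)
          (by simpa only [hu0] using hD) hu
      exact (continuousAt_const.mul hQ).mul h3
    have e1 : ∀ᶠ z in 𝓝 (0 : ℂ), ‖(-(k * a)⁻¹ * Q z * dslope g 0 (z ^ k * Q z)) - 1‖ < 1 / 2 := by
      have h0 : (-(k * a)⁻¹ * Q 0 * dslope g 0 ((0 : ℂ) ^ k * Q 0)) = 1 := by
        rw [hu0, hD0, ← ha]; field_simp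
      have := Metric.tendsto_nhds.1 hlim (1 / 2) (by norm_num)
      simpa only [h0, dist_eq_norm] using this
    have e2 : ∀ᶠ z in 𝓝 (0 : ℂ), ‖z ^ k * Q z‖ < 1 := by
      have := Metric.tendsto_nhds.1 hu 1 (by norm_num)
      simpa only [hu0, dist_zero_right] using this
    obtain ⟨δ, hδ, H⟩ := Metric.eventually_nhds_iff.1 (e1.and e2)
    refine ⟨δ, hδ, fun z hz hzd => ?_⟩
    obtain ⟨H1, H2⟩ := H (by simpa using hzd)
    have hfz : f z = z * (1 + z ^ k * Q z) := by rw [hf]; ring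
    have hne : 1 + z ^ k * Q z ≠ 0 := by
      intro h
      have : z ^ k * Q z = -1 := by linear_combination h
      rw [this] at H2; simp at H2
    refine ⟨by rw [hfz]; exact mul_ne_zero hz hne, ?_⟩
    have key : -(k * a * (f z) ^ k)⁻¹ - -(k * a * z ^ k)⁻¹
        = -(k * a)⁻¹ * Q z * dslope g 0 (z ^ k * Q z) := by
      have h4 := sub_smul_dslope g 0 (z ^ k * Q z)
      have h5 : g (z ^ k * Q z) - g 0 = ((1 + z ^ k * Q z) ^ k)⁻¹ - 1 := by simp [hg]
      rw [h5, smul_eq_mul, sub_zero] at h4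
      have hzk : z ^ k ≠ 0 := pow_ne_zero _ hz
      have h6 : Q z * dslope g 0 (z ^ k * Q z) = (z ^ k)⁻¹ * (((1 + z ^ k * Q z) ^ k)⁻¹ - 1) := by
        rw [← h4]; field_simp
      rw [mul_assoc (-(k * a : ℂ)⁻¹), h6, hfz, mul_pow, mul_inv, mul_inv, mul_inv, mul_inv]
      ring
    rw [← key] at H1
    have h7 := (Complex.abs_re_le_norm _).trans H1.le
    rw [Complex.sub_re, Complex.sub_re, Complex.one_re, abs_le] at h7
    linarith [h7.1]

lemma aux_open (f Q : ℂ → ℂ) (k : ℕ) (hk : 1 ≤ k) (hQ : ContinuousAt Q 0) (hQ0 : Q 0 ≠ 0)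
    (hfc : Continuous f) (hf : ∀ z, f z = z + z ^ (k + 1) * Q z) :
    IsOpen {z | Tendsto (fun n => f^[n] z) atTop (𝓝 0) ∧ ∀ n, f^[n] z ≠ 0} := by
  obtain ⟨w, hw, hwR, δ, hδ, H⟩ := aux_fatou f Q k hk hQ hQ0 hf
  have hf0 : f 0 = 0 := by simp [hf]
  obtain ⟨R, hR⟩ := hwR δ hδ
  set V : Set ℂ := {0}ᶜ ∩ w ⁻¹' {x | R < x.re} with hV
  have hVo : IsOpen V :=
    hw.isOpen_inter_preimage isOpen_compl_singleton (isOpen_lt continuous_const Complex.continuous_re)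
  have hit : ∀ z ∈ V, ∀ n : ℕ, f^[n] z ≠ 0 ∧ (w z).re + n / 2 ≤ (w (f^[n] z)).re := by
    intro z hz n
    induction n with
    | zero => exact ⟨hz.1, by simp⟩
    | succ n ih =>
      rw [Function.iterate_succ_apply']
      have hz2 : R < (w z).re := hz.2
      have := H _ ih.1 (hR _ ih.1 (by have : (0:ℝ) ≤ n := n.cast_nonneg
                                      linarith [ih.2]))
      refine ⟨this.1, ?_⟩
      push_cast
      linarith [this.2, ih.2]
  have hVt : ∀ z ∈ V, Tendsto (fun n => f^[n] z) atTop (𝓝 0) := by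
    intro z hz
    rw [Metric.tendsto_atTop]
    intro ε hε
    obtain ⟨R', hR'⟩ := hwR ε hε
    obtain ⟨N, hN⟩ := exists_nat_gt (2 * (R' - (w z).re))
    refine ⟨N, fun n hn => ?_⟩
    rw [dist_zero_right]
    have : (N : ℝ) ≤ n := by exact_mod_cast hn
    exact hR' _ (hit z hz n).1 (by linarith [(hit z hz n).2])
  have hstay : ∀ z n, f^[n] z = 0 → ∀ m, f^[m + n] z = 0 := by
    intro z n h m
    rw [Function.iterate_add_apply, h, Function.iterate_fixed hf0]
  have hset : {z | Tendsto (fun n => f^[n] z) atTop (𝓝 0) ∧ ∀ n, f^[n] z ≠ 0}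
      = ⋃ n : ℕ, (f^[n]) ⁻¹' V := by
    ext z
    simp only [mem_setOf_eq, mem_iUnion, mem_preimage]
    constructor
    · rintro ⟨h1, h2⟩
      obtain ⟨N, hN⟩ := Metric.tendsto_atTop.1 h1 δ hδ
      have h3 : ∀ m : ℕ, (w (f^[N] z)).re + m / 2 ≤ (w (f^[N + m] z)).re := by
        intro m
        induction m with
        | zero => simp
        | succ m ih =>
          rw [← add_assoc, Function.iterate_succ_apply']
          have := (H _ (h2 (N + m)) (by simpa using hN (N + m) (by omega))).2
          push_cast
          linarith
      obtain ⟨m, hm⟩ := exists_nat_gt (2 * (R - (w (f^[N] z)).re))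
      refine ⟨N + m, h2 _, ?_⟩
      show R < _
      linarith [h3 m]
    · rintro ⟨n, hn⟩
      constructor
      · have := hVt _ hn
        simp only [← Function.iterate_add_apply] at this
        exact (tendsto_add_atTop_iff_nat (f := fun m => f^[m] z) n).1 this
      · intro m hm
        have h4 := (hit _ hn m).1
        rw [← Function.iterate_add_apply, add_comm] at h4
        exact h4 (hstay z m hm n)
  rw [hset]
  exact isOpen_iUnion fun n => hVo.preimage (hfc.iterate n)

lemma aux_repel (f : ℂ → ℂ) (Q : ℂ → ℂ) (k : ℕ) (hk : 1 ≤ k) (hQ : Differentiable ℂ Q)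
    (hQ0 : Q 0 ≠ 0) (hf : ∀ z, f z = z + z ^ (k + 1) * Q z) (r C : ℝ) (hr : 0 < r)
    (hC : ∀ n : ℕ, ∀ z : ℂ, ‖z‖ = r → ‖f^[n] z‖ ≤ C) : False := by
  have hfd : Differentiable ℂ f := by
    have : f = fun z => z + z ^ (k + 1) * Q z := funext hf
    rw [this]; fun_prop
  have hf0 : f 0 = 0 := by simp [hf]
  have hex : ∀ n : ℕ, ∃ G : ℂ → ℂ, Differentiable ℂ G ∧ G 0 = n * Q 0 ∧
      ∀ z, f^[n] z = z + z ^ (k + 1) * G z := by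
    intro n
    induction n with
    | zero => exact ⟨fun _ => 0, by fun_prop, by simp, by simp⟩
    | succ n ih =>
      obtain ⟨G, hG, hG0, hGe⟩ := ih
      refine ⟨fun z => G z + (1 + z ^ k * G z) ^ (k + 1) * Q (f^[n] z), ?_, ?_, ?_⟩
      · have := hQ.comp (hfd.iterate n)
        have h2 : Differentiable ℂ (fun z => Q (f^[n] z)) := this
        fun_prop
      · simp only [Function.iterate_fixed hf0, hG0]
        simp [show k ≠ 0 by omega]; ring
      · intro z
        rw [Function.iterate_succ_apply', hf]
        have h3 : (f^[n] z) ^ (k + 1) = z ^ (k + 1) * (1 + z ^ k * G z) ^ (k + 1) := by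
          rw [hGe, ← mul_pow]; ring
        rw [h3]
        nth_rewrite 1 [hGe]
        ring
  obtain ⟨N, hN⟩ := exists_nat_gt ((C + r) / r ^ (k + 1) / ‖Q 0‖)
  obtain ⟨G, hG, hG0, hGe⟩ := hex N
  have hb : ‖G 0‖ ≤ (C + r) / r ^ (k + 1) := by
    refine Complex.norm_le_of_forall_mem_frontier_norm_le (U := Metric.ball 0 r)
      Metric.isBounded_ball hG.diffContOnCl ?_ (subset_closure (Metric.mem_ball_self hr))
    intro z hz
    rw [frontier_ball _ hr.ne'] at hz
    have hz' : ‖z‖ = r := by simpa using hz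
    rw [le_div_iff₀ (by positivity)]
    calc ‖G z‖ * r ^ (k + 1) = ‖f^[N] z - z‖ := by
          rw [hGe, add_sub_cancel_left, norm_mul, norm_pow, hz', mul_comm]
      _ ≤ ‖f^[N] z‖ + ‖z‖ := norm_sub_le _ _
      _ ≤ C + r := by rw [hz']; linarith [hC N z hz']
  rw [hG0, norm_mul, Complex.norm_natCast] at hb
  rw [div_lt_iff₀ (by positivity)] at hN
  linarith

lemma Pq_diff (ω : ℂ) : Differentiable ℂ (Pq ω) := by unfold Pq; fun_prop

lemma Pq_zero (ω : ℂ) : Pq ω 0 = 0 := by simp [Pq]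

open Polynomial in
lemma Pq_poly (ω : ℂ) (n : ℕ) : ∃ F : ℂ[X], F.natDegree = 2 ^ n ∧ (∀ z, (Pq ω)^[n] z = F.eval z) ∧
    X ^ 2 ∣ F - C (ω ^ n) * X := by
  induction n with
  | zero => exact ⟨X, by simp, by simp, by simp⟩
  | succ n ih =>
    obtain ⟨F, h1, h2, h3⟩ := ih
    refine ⟨(C ω * X + X ^ 2).comp F, ?_, ?_, ?_⟩
    · rw [natDegree_comp, h1]
      have : (C ω * X + X ^ 2 : ℂ[X]).natDegree = 2 := by compute_degree!
      rw [this]; ring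
    · intro z
      rw [Function.iterate_succ_apply', h2]
      simp [Pq]
    · obtain ⟨G, hG⟩ := h3
      have hF : F = C (ω ^ n) * X + X ^ 2 * G := by rw [← hG]; ring
      refine ⟨C ω * G + (C (ω ^ n) + X * G) ^ 2, ?_⟩
      simp only [add_comp, mul_comp, C_comp, X_comp, pow_comp]
      rw [hF]
      simp only [map_pow]
      ring

open Polynomial in
lemma Pq_factor (ω : ℂ) (q : ℕ) (hq : 2 ≤ q) (hω : ω ^ q = 1) :
    ∃ (k : ℕ) (Q : ℂ[X]), 1 ≤ k ∧ Q.eval 0 ≠ 0 ∧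
      ∀ z, (Pq ω)^[q] z = z + z ^ (k + 1) * Q.eval z := by
  obtain ⟨F, h1, h2, h3⟩ := Pq_poly ω q
  rw [hω, C_1, one_mul] at h3
  have hne : F - X ≠ 0 := by
    intro h
    rw [sub_eq_zero] at h
    rw [h, natDegree_X] at h1
    have := Nat.one_lt_two_pow (n := q) (by omega)
    omega
  obtain ⟨Q, hQ1, hQ2⟩ := exists_eq_pow_rootMultiplicity_mul_and_not_dvd (F - X) hne 0
  set m := rootMultiplicity 0 (F - X)
  have hm : 2 ≤ m := (le_rootMultiplicity_iff hne).2 (by simpa using h3)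
  refine ⟨m - 1, Q, by omega, ?_, ?_⟩
  · intro h
    exact hQ2 (dvd_iff_isRoot.2 h)
  · intro z
    rw [h2, show m - 1 + 1 = m by omega]
    have := congrArg (eval z) hQ1
    simp at this
    linear_combination this

lemma basinAug_pre (ω z : ℂ) : Pq ω z ∈ basinAug ω ↔ z ∈ basinAug ω := by
  simp only [basinAug, mem_setOf_eq, ← Function.iterate_succ_apply]
  exact tendsto_add_atTop_iff_nat (f := fun n => (Pq ω)^[n] z) 1

lemma basinAug_iter (ω z : ℂ) (n : ℕ) : (Pq ω)^[n] z ∈ basinAug ω ↔ z ∈ basinAug ω := by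
  induction n with
  | zero => simp
  | succ n ih => rw [Function.iterate_succ_apply', basinAug_pre, ih]

lemma Pq_fiber (ω c : ℂ) (n : ℕ) : {z | (Pq ω)^[n] z = c}.Finite := by
  obtain ⟨F, h1, h2, -⟩ := Pq_poly ω n
  have hne : F - Polynomial.C c ≠ 0 := by
    intro h
    rw [sub_eq_zero] at h
    rw [h, Polynomial.natDegree_C] at h1
    exact absurd h1.symm (by positivity)
  refine (Polynomial.finite_setOfPred_isRoot hne).subset ?_
  intro z hz
  have hz' : (Pq ω)^[n] z = c := hz
  simp [Polynomial.IsRoot, ← h2, hz']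

lemma basinAug_bdd (ω : ℂ) (hω : ‖ω‖ = 1) (z : ℂ) (hz : z ∈ basinAug ω) : ‖z‖ ≤ 3 := by
  by_contra hc
  push Not at hc
  have h : ∀ n, 3 < ‖(Pq ω)^[n] z‖ := by
    intro n
    induction n with
    | zero => simpa
    | succ n ih =>
      rw [Function.iterate_succ_apply']
      set y := (Pq ω)^[n] z
      have h1 : ‖y ^ 2‖ ≤ ‖Pq ω y‖ + ‖ω * y‖ := by
        have : y ^ 2 = Pq ω y - ω * y := by simp [Pq]
        rw [this]; exact norm_sub_le _ _
      rw [norm_pow, norm_mul, hω] at h1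
      nlinarith
  have hz' : Tendsto (fun n => (Pq ω)^[n] z) atTop (𝓝 0) := hz
  obtain ⟨N, hN⟩ := Metric.tendsto_atTop.1 hz' 3 (by norm_num)
  have := hN N le_rfl
  rw [dist_zero_right] at this
  linarith [h N]

lemma tendsto_iter (g : ℂ → ℂ) (hg : Continuous g) (g0 : g 0 = 0) (q : ℕ) (hq : 0 < q) (z : ℂ) :
    Tendsto (fun n => g^[n] z) atTop (𝓝 0) ↔ Tendsto (fun n => (g^[q])^[n] z) atTop (𝓝 0) := by
  constructor
  · intro h
    simp only [← Function.iterate_mul]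
    exact h.comp (tendsto_id.const_mul_atTop' hq)
  · intro h
    have h1 : ∀ r : ℕ, Tendsto (fun n => g^[r] ((g^[q])^[n] z)) atTop (𝓝 0) := by
      intro r
      have h2 := ((hg.iterate r).tendsto 0).comp h
      rwa [Function.iterate_fixed g0] at h2
    rw [Metric.tendsto_atTop]
    intro ε hε
    have h2 : ∀ᶠ n in atTop, ∀ r ∈ Finset.range q, dist (g^[r] ((g^[q])^[n] z)) 0 < ε :=
      (Filter.eventually_all_finset _).2 fun r _ => Metric.tendsto_nhds.1 (h1 r) ε hε
    obtain ⟨N, hN⟩ := eventually_atTop.1 h2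
    refine ⟨q * N, fun n hn => ?_⟩
    have h3 := hN (n / q) ((Nat.le_div_iff_mul_le hq).2 (by rwa [mul_comm])) (n % q)
      (Finset.mem_range.2 (Nat.mod_lt _ hq))
    rwa [← Function.iterate_mul, ← Function.iterate_add_apply, Nat.mod_add_div] at h3

lemma zero_mem_interior_of (ω z : ℂ) (n : ℕ) (h : basinAug ω ∈ 𝓝 z) :
    basinAug ω ∈ 𝓝 ((Pq ω)^[n] z) := by
  have han : AnalyticAt ℂ ((Pq ω)^[n]) z := ((Pq_diff ω).iterate n).analyticAt z
  rcases han.eventually_constant_or_nhds_le_map_nhds with hc | hm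
  · exfalso
    have h1 : {y | (Pq ω)^[n] y = (Pq ω)^[n] z} ∈ 𝓝 z := hc
    exact infinite_of_mem_nhds z h1 (Pq_fiber ω _ n)
  · apply hm
    rw [Filter.mem_map]
    filter_upwards [h] with y hy
    exact (basinAug_iter ω y n).2 hy

/-- The parabolic basin `Λ_ω` is open and equals the interior of
the augmented basin `Λ̃_ω`; consequently `Λ̃_ω` is the disjoint union of the open
set `Λ_ω` and the countable backward orbit of the parabolic fixed point. -/
theorem basin_open_and_decomposition
    (p q : ℕ) (hq : 2 ≤ q) (hp0 : 0 < p) (hpq : p < q) (hcop : Nat.Coprime p q)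
    (ω : ℂ) (hω : ω = Complex.exp (2 * Real.pi * Complex.I * (p : ℂ) / (q : ℂ))) :
    IsOpen (basin ω) ∧
    basin ω = interior (basinAug ω) ∧
    basinAug ω = basin ω ∪ preFixed ω ∧
    Disjoint (basin ω) (preFixed ω) ∧
    (preFixed ω).Countable := by
  have hq0 : (q : ℂ) ≠ 0 := by exact_mod_cast (by omega : q ≠ 0)
  have hωq : ω ^ q = 1 := by
    rw [hω, ← Complex.exp_nat_mul, Complex.exp_eq_one_iff]
    exact ⟨p, by push_cast; field_simp⟩
  have hωn : ‖ω‖ = 1 := Complex.norm_eq_one_of_pow_eq_one hωq (by omega)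
  obtain ⟨k, Q, hk, hQ0, hf⟩ := Pq_factor ω q hq hωq
  have hcont : Continuous (Pq ω) := (Pq_diff ω).continuous
  have hstay : ∀ z n, (Pq ω)^[n] z = 0 → ∀ m, n ≤ m → (Pq ω)^[m] z = 0 := by
    intro z n h m hm
    obtain ⟨j, rfl⟩ := Nat.exists_eq_add_of_le' hm
    rw [Function.iterate_add_apply, h, Function.iterate_fixed (Pq_zero ω)]
  have hopen : IsOpen (basin ω) := by
    have h1 := aux_open ((Pq ω)^[q]) (fun z => Q.eval z) k hk Q.continuous.continuousAt hQ0
      (hcont.iterate q) hf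
    convert h1 using 1
    ext z
    simp only [basin, basinAug, preFixed, mem_diff, mem_setOf_eq, not_exists]
    rw [tendsto_iter _ hcont (Pq_zero ω) q (by omega)]
    refine and_congr_right fun _ => ⟨fun h n => ?_, fun h n hn => ?_⟩
    · rw [← Function.iterate_mul]; exact h _
    · apply h n
      rw [← Function.iterate_mul]
      exact hstay z n hn _ (Nat.le_mul_of_pos_left n (by omega))
  have hsub : preFixed ω ⊆ basinAug ω := by
    rintro z ⟨n, hn⟩
    refine tendsto_const_nhds.congr' ?_
    filter_upwards [eventually_ge_atTop n] with m hm
    exact (hstay z n hn m hm).symm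
  refine ⟨hopen, ?_, ?_, disjoint_sdiff_left, ?_⟩
  · apply Subset.antisymm
    · exact interior_maximal diff_subset hopen
    · intro z hz
      refine ⟨interior_subset hz, ?_⟩
      rintro ⟨n, hn⟩
      have h0 := zero_mem_interior_of ω z n (mem_interior_iff_mem_nhds.1 hz)
      rw [hn] at h0
      obtain ⟨r, hr, hball⟩ := Metric.nhds_basis_closedBall.mem_iff.1 h0
      refine aux_repel ((Pq ω)^[q]) (fun z => Q.eval z) k hk Q.differentiable hQ0 hf r 3 hr ?_
      intro m y hy
      apply basinAug_bdd ω hωn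
      rw [← Function.iterate_mul, basinAug_iter]
      exact hball (by simp [hy])
  · exact (diff_union_of_subset hsub).symm
  · have : preFixed ω = ⋃ n : ℕ, {z | (Pq ω)^[n] z = 0} := by
      ext z; simp [preFixed]
    rw [this]
    exact countable_iUnion fun n => (Pq_fiber ω 0 n).countable
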